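/- If a and b are linked by I over M, then Supp Hom_R(R/a, M/IM) = Supp(M/aM). -/

import Mathlib

open RingTheory.Sequence

/-- The colon submodule `N :_M a = {m ∈ M | a m ⊆ N}`. -/
def Submodule.colonBy {R M : Type*} [CommRing R] [AddCommGroup M] [Module R M]
    (N : Submodule R M) (a : Ideal R) : Submodule R M :=
  ⨅ r ∈ a, N.comap (LinearMap.lsmul R M r)
/-- `a` and `b` are linked by `I` over `M`: `I ⊆ a ∩ b` is generated by an `M`-regular
sequence, `aM ≠ M ≠ bM`, `IM :_M a = bM` and `IM :_M b = aM`. -/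
def Ideal.LinkedBy (R M : Type*) [CommRing R] [AddCommGroup M] [Module R M]
    (a b I : Ideal R) : Prop :=
  I ≤ a ⊓ b ∧
  (∃ rs : List R, I = Ideal.ofList rs ∧ RingTheory.Sequence.IsRegular M rs) ∧
  a • (⊤ : Submodule R M) ≠ ⊤ ∧ b • (⊤ : Submodule R M) ≠ ⊤ ∧
  (I • ⊤ : Submodule R M).colonBy a = b • (⊤ : Submodule R M) ∧
  (I • ⊤ : Submodule R M).colonBy b = a • (⊤ : Submodule R M)

theorem Submodule.mem_colonBy {R M : Type*} [CommRing R] [AddCommGroup M] [Module R M]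
    {N : Submodule R M} {a : Ideal R} {m : M} : m ∈ N.colonBy a ↔ ∀ r ∈ a, r • m ∈ N := by
  simp [Submodule.colonBy]

/-- Over a Noetherian ring, homomorphisms from a cyclic module to a finite module form a finite
module. -/
theorem Module.Finite.linearMap_quotient_ideal {R N : Type*} [CommRing R] [IsNoetherianRing R]
    [AddCommGroup N] [Module R N] [Module.Finite R N] (a : Ideal R) :
    Module.Finite R ((R ⧸ a) →ₗ[R] N) := by
  refine Module.Finite.of_injective (LinearMap.applyₗ (R := R) (1 : R ⧸ a)) fun f g hfg => ?_
  refine Submodule.linearMap_qext a (LinearMap.ext_ring ?_)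
  exact hfg

/-- Both `a` and the annihilator of `M` kill `Hom(R/a, M/N)`. -/
theorem Ideal.sup_annihilator_le_annihilator_hom {R M : Type*} [CommRing R]
    [AddCommGroup M] [Module R M] (a : Ideal R) (N : Submodule R M) :
    a ⊔ Module.annihilator R M ≤ Module.annihilator R ((R ⧸ a) →ₗ[R] (M ⧸ N)) := by
  refine sup_le (fun r hr => ?_) (fun r hr => ?_) <;> rw [Module.mem_annihilator] at * <;>
    intro f <;> ext
  · have h1 : r • (1 : R ⧸ a) = 0 := by
      rw [Algebra.smul_def, mul_one]
      exact Ideal.Quotient.eq_zero_iff_mem.mpr hr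
    change r • f 1 = 0
    rw [← map_smul, h1, map_zero]
  · change r • f 1 = 0
    obtain ⟨m, hm⟩ := N.mkQ_surjective (f 1)
    rw [← hm, ← map_smul, hr, map_zero]

/-- If `b M ⊆ N :_M a` and `N :_M b ⊆ a M`, then whatever kills `Hom(R/a, M/N)` kills `M/aM`. -/
theorem Ideal.annihilator_hom_le_annihilator_quotient {R M : Type*} [CommRing R]
    [AddCommGroup M] [Module R M] {a b : Ideal R} {N : Submodule R M}
    (hb : b • (⊤ : Submodule R M) ≤ N.colonBy a) (ha : N.colonBy b ≤ a • (⊤ : Submodule R M)) :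
    Module.annihilator R ((R ⧸ a) →ₗ[R] (M ⧸ N)) ≤
      Module.annihilator R (M ⧸ (a • ⊤ : Submodule R M)) := by
  intro s hs
  rw [Module.mem_annihilator] at hs ⊢
  intro x
  obtain ⟨m, rfl⟩ := Submodule.mkQ_surjective _ x
  rw [← map_smul, Submodule.mkQ_apply, Submodule.Quotient.mk_eq_zero]
  refine ha (Submodule.mem_colonBy.mpr fun t ht => ?_)
  have htm := Submodule.mem_colonBy.mp
    (hb (Submodule.smul_mem_smul ht (Submodule.mem_top (x := m))))
  let f : (R ⧸ a) →ₗ[R] (M ⧸ N) :=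
    Submodule.liftQ a (LinearMap.toSpanSingleton R (M ⧸ N) (N.mkQ (t • m))) fun r hr => by
      rw [LinearMap.mem_ker, LinearMap.toSpanSingleton_apply, ← map_smul, Submodule.mkQ_apply,
        Submodule.Quotient.mk_eq_zero]
      exact htm r hr
  have hf : f (Submodule.Quotient.mk 1) = N.mkQ (t • m) := by
    simp only [f, Submodule.liftQ_apply, LinearMap.toSpanSingleton_apply, one_smul]
  have hsf : s • f (Submodule.Quotient.mk 1) = 0 := LinearMap.congr_fun (hs f) _
  rw [hf, ← map_smul, Submodule.mkQ_apply, Submodule.Quotient.mk_eq_zero] at hsf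
  rwa [smul_comm]

/-- If `a` and `b` are linked by `I` over `M`, then
`Supp Hom_R(R/a, M/IM) = Supp (M/aM)`. -/
theorem support_hom_eq_of_linked {R M : Type*} [CommRing R] [IsNoetherianRing R]
    [AddCommGroup M] [Module R M] [Module.Finite R M]
    (a b I : Ideal R) (h : Ideal.LinkedBy R M a b I) :
    Module.support R ((R ⧸ a) →ₗ[R] (M ⧸ (I • ⊤ : Submodule R M))) =
      Module.support R (M ⧸ (a • ⊤ : Submodule R M)) := by
  obtain ⟨-, -, -, -, hb, ha⟩ := h
  have := Module.Finite.linearMap_quotient_ideal (N := M ⧸ (I • ⊤ : Submodule R M)) a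
  refine Set.Subset.antisymm ?_ ?_
  · rw [Module.support_quotient, Module.support_eq_zeroLocus, Module.support_eq_zeroLocus,
      ← PrimeSpectrum.zeroLocus_union]
    obtain ⟨hle, hle'⟩ := sup_le_iff.mp
      (Ideal.sup_annihilator_le_annihilator_hom a (I • ⊤ : Submodule R M))
    exact PrimeSpectrum.zeroLocus_anti_mono (Set.union_subset hle' hle)
  · rw [Module.support_eq_zeroLocus, Module.support_eq_zeroLocus]
    exact PrimeSpectrum.zeroLocus_anti_mono
      (Ideal.annihilator_hom_le_annihilator_quotient hb.ge ha.le)
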